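/- arXiv:1205.3454 — 2 statements merged into one kernel-verified Lean document; each statement's English description precedes it below -/
import Mathlib

section
/- Let S be an idempotent covered semigroup. Then Green's relation 𝓗 is a left congruence on S if and only if 𝓗 is a left congruence on T(S); 𝓗 is a right congruence on S if and only if 𝓗 is a right congruence on T(S); and consequently S is cryptic (𝓗 is a congruence) if and only if T(S) is cryptic. -/
namespace SemibandEmbed

/-- The two-element right-zero semigroup `R₂ = {σ, τ}`. -/
inductive R2 : Type where
  | σ : R2
  | τ : R2
  deriving DecidableEq

section GreenDefs

variable {S : Type*} [Semigroup S]

/-- Green's relation 𝓡 : `a 𝓡 b` iff `a S¹ = b S¹` (inside `S¹ = WithOne S`). -/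
def greenR (a b : S) : Prop :=
  {x : WithOne S | ∃ u : WithOne S, x = (a : WithOne S) * u} =
    {x : WithOne S | ∃ u : WithOne S, x = (b : WithOne S) * u}

/-- Green's relation 𝓛 : `a 𝓛 b` iff `S¹ a = S¹ b`. -/
def greenL (a b : S) : Prop :=
  {x : WithOne S | ∃ u : WithOne S, x = u * (a : WithOne S)} =
    {x : WithOne S | ∃ u : WithOne S, x = u * (b : WithOne S)}

/-- Green's relation 𝓗 = 𝓛 ∩ 𝓡. -/
def greenH (a b : S) : Prop := greenL a b ∧ greenR a b

/-- Green's relation 𝓓 : `a 𝓓 b` iff `a 𝓡 c` and `c 𝓛 b` for some `c`. -/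
def greenD (a b : S) : Prop := ∃ c : S, greenR a c ∧ greenL c b

/-- Green's relation 𝓙 : `a 𝓙 b` iff `S¹ a S¹ = S¹ b S¹`. -/
def greenJ (a b : S) : Prop :=
  {x : WithOne S | ∃ u v : WithOne S, x = u * (a : WithOne S) * v} =
    {x : WithOne S | ∃ u v : WithOne S, x = u * (b : WithOne S) * v}

/-- Mitsch's natural partial order on a semigroup. -/
def natLe (a b : S) : Prop := ∃ x y : S, a = x * b ∧ a = b * y ∧ a = a * y

end GreenDefs

/-- A semigroup is idempotent covered if every element `s` satisfies `s e = s = f s`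
for some idempotents `e`, `f`. -/
def IdemCovered (S : Type*) [Semigroup S] : Prop :=
  ∀ s : S, ∃ e f : S, IsIdempotentElem e ∧ IsIdempotentElem f ∧ s * e = s ∧ f * s = s

/-- A semigroup is regular if every `a` satisfies `a x a = a` for some `x`. -/
def IsRegularSemigroup (S : Type*) [Semigroup S] : Prop :=
  ∀ a : S, ∃ x : S, a * x * a = a

/-- A semigroup is periodic if every element generates a finite monogenic subsemigroup,
i.e. `aᵐ = aⁿ` for some `0 < m < n` (powers computed in `S¹ = WithOne S`). -/
def IsPeriodic (S : Type*) [Semigroup S] : Prop :=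
  ∀ a : S, ∃ m n : ℕ, 0 < m ∧ m < n ∧ (a : WithOne S) ^ m = (a : WithOne S) ^ n

/-- `𝓗` is a left congruence. -/
def IsLeftCongH (S : Type*) [Semigroup S] : Prop :=
  ∀ a b c : S, greenH a b → greenH (c * a) (c * b)

/-- `𝓗` is a right congruence. -/
def IsRightCongH (S : Type*) [Semigroup S] : Prop :=
  ∀ a b c : S, greenH a b → greenH (a * c) (b * c)

/-- A semigroup is completely regular if every element is 𝓗-related to an idempotent. -/
def IsCompletelyRegular (S : Type*) [Semigroup S] : Prop :=
  ∀ a : S, ∃ e : S, IsIdempotentElem e ∧ greenH a e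

section SemidirectProduct

variable {S : Type*} [Semigroup S]

/-- The multiplication of the semidirect product `(S × S) * R₂`:
`(t₁,s₁,σ)·(t₂,s₂,α) = (t₁s₂, s₁s₂, α)` and `(t₁,s₁,τ)·(t₂,s₂,α) = (t₁t₂, s₁t₂, α)`. -/
def sdMul (x y : S × S × R2) : S × S × R2 :=
  match x, y with
  | (t₁, s₁, R2.σ), (_, s₂, α) => (t₁ * s₂, s₁ * s₂, α)
  | (t₁, s₁, R2.τ), (t₂, _, α) => (t₁ * t₂, s₁ * t₂, α)

instance : Mul (S × S × R2) := ⟨sdMul⟩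

theorem sdMul_def (x y : S × S × R2) : x * y = sdMul x y := rfl

instance : Semigroup (S × S × R2) where
  mul_assoc x y z := by
    obtain ⟨t₁, s₁, α₁⟩ := x
    obtain ⟨t₂, s₂, α₂⟩ := y
    obtain ⟨t₃, s₃, α₃⟩ := z
    cases α₁ <;> cases α₂ <;> simp [sdMul_def, sdMul, mul_assoc]

/-- The set `E = {(s,t,α) ∈ E(T*R₂) : s ∈ S¹ t}`. -/
def Eset (S : Type*) [Semigroup S] : Set (S × S × R2) :=
  {x | IsIdempotentElem x ∧ ∃ a : WithOne S, (x.1 : WithOne S) = a * (x.2.1 : WithOne S)}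

/-- `T(S)`: the subsemigroup of the semidirect product generated by `E`. -/
def TS (S : Type*) [Semigroup S] : Subsemigroup (S × S × R2) :=
  Subsemigroup.closure (Eset S)

/-- Green's `𝓛` is a right congruence. -/
theorem greenL_mul_right {S : Type*} [Semigroup S] {a b : S} (hab : greenL a b) (c : S) :
    greenL (a * c) (b * c) := by
  have key : ∀ {a b : S}, greenL a b → ∀ x : WithOne S,
      (∃ u : WithOne S, x = u * ((a * c : S) : WithOne S)) →
      (∃ u : WithOne S, x = u * ((b * c : S) : WithOne S)) := by
    intro a b hab x hx
    obtain ⟨u, rfl⟩ := hx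
    have h1 : (u * (a : WithOne S)) ∈
        {x : WithOne S | ∃ u : WithOne S, x = u * (a : WithOne S)} := ⟨u, rfl⟩
    rw [greenL] at hab
    rw [hab] at h1
    obtain ⟨w, hw⟩ := h1
    refine ⟨w, ?_⟩
    rw [WithOne.coe_mul, WithOne.coe_mul, ← mul_assoc, hw, mul_assoc]
  have hab' : greenL b a := hab.symm
  ext x
  exact ⟨key hab x, key hab' x⟩

/-- `R(S) = {(s,t,α) ∈ T(S) : s 𝓛 t}`, a subsemigroup of `T(S)`. -/
def RS (S : Type*) [Semigroup S] : Subsemigroup ↥(TS S) where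
  carrier := {x | greenL (x : S × S × R2).1 (x : S × S × R2).2.1}
  mul_mem' := by
    rintro ⟨⟨s, t, α⟩, hx⟩ ⟨⟨u, v, β⟩, hy⟩ hxs hys
    simp only [Set.mem_setOf_eq] at hxs hys ⊢
    cases α <;> exact greenL_mul_right hxs _

end SemidirectProduct


theorem greenL_iff' {M : Type*} [Semigroup M] (h : ∀ x : M, ∃ u, u * x = x) (a b : M) :
    greenL a b ↔ (∃ u, a = u * b) ∧ (∃ u, b = u * a) := by
  have key : ∀ a b : M, (a : WithOne M) ∈ {x : WithOne M | ∃ u : WithOne M, x = u * (b : WithOne M)} →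
      ∃ u, a = u * b := by
    rintro a b ⟨u, hu⟩
    rcases u with _ | u
    · change _ = (1 : WithOne _) * _ at hu
      obtain ⟨w, hw⟩ := h a
      rw [one_mul] at hu
      have := WithOne.coe_inj.1 hu
      exact ⟨w, by rw [← this, hw]⟩
    · exact ⟨_, WithOne.coe_inj.1 hu⟩
  constructor
  · intro hab
    constructor
    · apply key; rw [← hab]; exact ⟨1, (one_mul _).symm⟩
    · apply key; rw [hab]; exact ⟨1, (one_mul _).symm⟩
  · rintro ⟨⟨u, hu⟩, ⟨v, hv⟩⟩
    ext x
    constructor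
    · rintro ⟨w, rfl⟩
      exact ⟨w * u, by rw [mul_assoc, ← WithOne.coe_mul, ← hu]⟩
    · rintro ⟨w, rfl⟩
      exact ⟨w * v, by rw [mul_assoc, ← WithOne.coe_mul, ← hv]⟩

theorem greenR_iff' {M : Type*} [Semigroup M] (h : ∀ x : M, ∃ u, x * u = x) (a b : M) :
    greenR a b ↔ (∃ u, a = b * u) ∧ (∃ u, b = a * u) := by
  have key : ∀ a b : M, (a : WithOne M) ∈ {x : WithOne M | ∃ u : WithOne M, x = (b : WithOne M) * u} →
      ∃ u, a = b * u := by
    rintro a b ⟨u, hu⟩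
    rcases u with _ | u
    · change _ = _ * (1 : WithOne _) at hu
      obtain ⟨w, hw⟩ := h a
      rw [mul_one] at hu
      have := WithOne.coe_inj.1 hu
      exact ⟨w, by rw [← this, hw]⟩
    · exact ⟨_, WithOne.coe_inj.1 hu⟩
  constructor
  · intro hab
    constructor
    · apply key; rw [← hab]; exact ⟨1, (mul_one _).symm⟩
    · apply key; rw [hab]; exact ⟨1, (mul_one _).symm⟩
  · rintro ⟨⟨u, hu⟩, ⟨v, hv⟩⟩
    ext x
    constructor
    · rintro ⟨w, rfl⟩
      exact ⟨u * w, by rw [← mul_assoc, ← WithOne.coe_mul, ← hu]⟩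
    · rintro ⟨w, rfl⟩
      exact ⟨v * w, by rw [← mul_assoc, ← WithOne.coe_mul, ← hv]⟩

section
variable {S : Type*} [Semigroup S]

theorem mulσ (a b c d : S) (β : R2) :
    ((a, b, R2.σ) : S × S × R2) * (c, d, β) = (a * d, b * d, β) := rfl

theorem mulτ (a b c d : S) (β : R2) :
    ((a, b, R2.τ) : S × S × R2) * (c, d, β) = (a * c, b * c, β) := rfl

theorem covL (hS : IdemCovered S) (x : S) : ∃ u, u * x = x := by
  obtain ⟨e, f, -, -, -, h⟩ := hS x
  exact ⟨f, h⟩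

theorem covR (hS : IdemCovered S) (x : S) : ∃ u, x * u = x := by
  obtain ⟨e, f, -, -, h, -⟩ := hS x
  exact ⟨e, h⟩

theorem mem_Eset_of (s t : S) (α : R2) (k : S) (h : s = k * t)
    (hi : ((s, t, α) : S × S × R2) * (s, t, α) = (s, t, α)) : (s, t, α) ∈ TS S :=
  Subsemigroup.subset_closure ⟨hi, ((k : S) : WithOne S), by
    simp only [← WithOne.coe_mul]; rw [← h]⟩

theorem mem_TS_iff (hS : IdemCovered S) (s t : S) (α : R2) :
    (s, t, α) ∈ TS S ↔ ∃ k, s = k * t := by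
  constructor
  · intro h
    have : ∀ x ∈ TS S, ∃ k, x.1 = k * x.2.1 := by
      intro x hx
      induction hx using Subsemigroup.closure_induction with
      | mem x hx =>
        obtain ⟨-, a, ha⟩ := hx
        rcases a with _ | a
        · change _ = (1 : WithOne _) * _ at ha
          obtain ⟨w, hw⟩ := covL hS x.1
          rw [one_mul] at ha
          have := WithOne.coe_inj.1 ha
          exact ⟨w, by rw [← this, hw]⟩
        · exact ⟨_, WithOne.coe_inj.1 ha⟩
      | mul x y _ _ hx hy =>
        obtain ⟨a, b, α⟩ := x
        obtain ⟨c, d, β⟩ := y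
        obtain ⟨k, hk⟩ := hx
        simp only at hk
        cases α
        · exact ⟨k, by simp only [mulσ, hk, mul_assoc]⟩
        · exact ⟨k, by simp only [mulτ, hk, mul_assoc]⟩
    exact this _ h
  · rintro ⟨a, rfl⟩
    obtain ⟨e, f, he, hf, hte, hft⟩ := hS t
    have he' : e * e = e := he
    have hf' : f * f = f := hf
    have h1 : (a * f, f, R2.σ) ∈ TS S :=
      mem_Eset_of _ _ _ a rfl (by rw [mulσ, mul_assoc, hf'])
    have h2 : (f, f, R2.τ) ∈ TS S := mem_Eset_of _ _ _ f hf'.symm (by rw [mulτ, hf'])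
    have h3 : (t, e, R2.σ) ∈ TS S := mem_Eset_of _ _ _ t hte.symm (by rw [mulσ, hte, he'])
    have h4 : (e, e, R2.τ) ∈ TS S := mem_Eset_of _ _ _ e he'.symm (by rw [mulτ, he'])
    have h5 := (TS S).mul_mem ((TS S).mul_mem h1 h2) h3
    rw [mulσ, mulτ, hf', mul_assoc a, hf', mul_assoc, hft] at h5
    cases α
    · exact h5
    · have h6 := (TS S).mul_mem h5 h4
      rwa [mulσ, mul_assoc, hte] at h6

theorem TS_covL (hS : IdemCovered S) (x : TS S) : ∃ u, u * x = x := by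
  obtain ⟨⟨s, t, α⟩, hx⟩ := x
  obtain ⟨k, hk⟩ := (mem_TS_iff hS _ _ _).1 hx
  obtain ⟨f, hf⟩ := covL hS t
  exact ⟨⟨(k * f, f, R2.σ), (mem_TS_iff hS _ _ _).2 ⟨k, rfl⟩⟩, Subtype.ext (by
    simp only [MulMemClass.mk_mul_mk, mulσ, mul_assoc, hf, hk])⟩

theorem self_mem (hS : IdemCovered S) (x : S) (α : R2) : (x, x, α) ∈ TS S := by
  obtain ⟨f, hf⟩ := covL hS x
  exact (mem_TS_iff hS _ _ _).2 ⟨f, hf.symm⟩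

theorem mul_self' (s t v : S) (α β : R2) :
    ((s, t, α) : S × S × R2) * (v, v, β) = (s * v, t * v, β) := by
  cases α <;> rfl

theorem TS_covR (hS : IdemCovered S) (x : TS S) : ∃ u, x * u = x := by
  obtain ⟨⟨s, t, α⟩, hx⟩ := x
  obtain ⟨k, hk⟩ := (mem_TS_iff hS _ _ _).1 hx
  obtain ⟨e, he⟩ := covR hS t
  exact ⟨⟨(e, e, α), self_mem hS _ _⟩, Subtype.ext (by
    simp only [MulMemClass.mk_mul_mk, mul_self', mul_assoc, he, hk])⟩

theorem TS_L (hS : IdemCovered S) (s t u v : S) (α β : R2) (hx : (s, t, α) ∈ TS S)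
    (hy : (u, v, β) ∈ TS S) :
    greenL (⟨_, hx⟩ : TS S) ⟨_, hy⟩ ↔ α = β ∧ greenL t v := by
  rw [greenL_iff' (TS_covL hS), greenL_iff' (covL hS)]
  have key : ∀ (s t u v : S) (α β : R2) (hx : (s, t, α) ∈ TS S) (hy : (u, v, β) ∈ TS S),
      (∃ w, (⟨_, hx⟩ : TS S) = w * ⟨_, hy⟩) ↔ α = β ∧ ∃ w, t = w * v := by
    intro s t u v α β hx hy
    constructor
    · rintro ⟨⟨⟨p, q, γ⟩, hz⟩, h⟩
      have h := congrArg Subtype.val h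
      obtain ⟨k, hk⟩ := (mem_TS_iff hS _ _ _).1 hy
      cases γ
      · simp only [MulMemClass.mk_mul_mk, mulσ, Prod.mk.injEq] at h
        exact ⟨h.2.2, _, h.2.1⟩
      · simp only [MulMemClass.mk_mul_mk, mulτ, Prod.mk.injEq] at h
        exact ⟨h.2.2, q * k, by rw [h.2.1, hk, mul_assoc]⟩
    · rintro ⟨rfl, w, rfl⟩
      obtain ⟨k, hk⟩ := (mem_TS_iff hS _ _ _).1 hx
      exact ⟨⟨(k * w, w, R2.σ), (mem_TS_iff hS _ _ _).2 ⟨k, rfl⟩⟩, Subtype.ext (by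
        simp only [MulMemClass.mk_mul_mk, mulσ, mul_assoc, hk])⟩
  rw [key, key]
  constructor
  · rintro ⟨⟨a, b⟩, -, c⟩; exact ⟨a, b, c⟩
  · rintro ⟨a, b, c⟩; exact ⟨⟨a, b⟩, a.symm, c⟩

theorem TS_R (hS : IdemCovered S) (s t u v : S) (α β : R2) (hx : (s, t, α) ∈ TS S)
    (hy : (u, v, β) ∈ TS S) :
    greenR (⟨_, hx⟩ : TS S) ⟨_, hy⟩ ↔ greenR t v ∧ ∃ k, s = k * t ∧ u = k * v := by
  rw [greenR_iff' (TS_covR hS), greenR_iff' (covR hS)]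
  have key : ∀ (s t u v : S) (α β : R2) (hx : (s, t, α) ∈ TS S) (hy : (u, v, β) ∈ TS S),
      (∃ w, (⟨_, hx⟩ : TS S) = ⟨_, hy⟩ * w) ↔ ∃ w, s = u * w ∧ t = v * w := by
    intro s t u v α β hx hy
    constructor
    · rintro ⟨⟨⟨p, q, γ⟩, hz⟩, h⟩
      have h := congrArg Subtype.val h
      cases β
      · simp only [MulMemClass.mk_mul_mk, mulσ, Prod.mk.injEq] at h
        exact ⟨_, h.1, h.2.1⟩
      · simp only [MulMemClass.mk_mul_mk, mulτ, Prod.mk.injEq] at h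
        exact ⟨_, h.1, h.2.1⟩
    · rintro ⟨w, rfl, rfl⟩
      exact ⟨⟨(w, w, α), self_mem hS _ _⟩, Subtype.ext (by
        simp only [MulMemClass.mk_mul_mk, mul_self'])⟩
  rw [key, key]
  constructor
  · rintro ⟨⟨w, h1, h2⟩, w', h3, h4⟩
    obtain ⟨k, hk⟩ := (mem_TS_iff hS _ _ _).1 hx
    exact ⟨⟨⟨w, h2⟩, w', h4⟩, k, hk, by rw [h3, h4, hk, mul_assoc]⟩
  · rintro ⟨⟨⟨w, h2⟩, w', h4⟩, k, rfl, rfl⟩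
    exact ⟨⟨w, by rw [mul_assoc, ← h2], h2⟩, w', by rw [mul_assoc, ← h4], h4⟩

theorem TS_H (hS : IdemCovered S) (s t u v : S) (α β : R2) (hx : (s, t, α) ∈ TS S)
    (hy : (u, v, β) ∈ TS S) :
    greenH (⟨_, hx⟩ : TS S) ⟨_, hy⟩ ↔ α = β ∧ greenH t v ∧ ∃ k, s = k * t ∧ u = k * v := by
  unfold greenH
  rw [TS_L hS, TS_R hS]
  tauto

theorem TS_H_diag (hS : IdemCovered S) (a b : S) :
    greenH (⟨_, self_mem hS a R2.σ⟩ : TS S) ⟨_, self_mem hS b R2.σ⟩ ↔ greenH a b := by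
  rw [TS_H hS]
  refine ⟨fun h => h.2.1, fun h => ⟨rfl, h, ?_⟩⟩
  obtain ⟨f, hf⟩ := covL hS a
  obtain ⟨-, w, hw⟩ := (greenR_iff' (covR hS) a b).1 h.2
  exact ⟨f, hf.symm, by rw [hw, ← mul_assoc, hf]⟩

theorem left_iff (hS : IdemCovered S) : IsLeftCongH S ↔ IsLeftCongH (TS S) := by
  constructor
  · rintro h ⟨⟨s, t, α⟩, hx⟩ ⟨⟨u, v, β⟩, hy⟩ ⟨⟨p, q, γ⟩, hz⟩ hH
    obtain ⟨rfl, hK, k, rfl, rfl⟩ := (TS_H hS _ _ _ _ _ _ hx hy).1 hH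
    obtain ⟨l, rfl⟩ := (mem_TS_iff hS _ _ _).1 hz
    cases γ
    · refine (TS_H hS _ _ _ _ _ _ _ _).2 ⟨rfl, h _ _ _ hK, l, mul_assoc _ _ _, mul_assoc _ _ _⟩
    · refine (TS_H hS _ _ _ _ _ _ _ _).2 ⟨rfl, ?_, l, mul_assoc _ _ _, mul_assoc _ _ _⟩
      exact h _ _ _ (h _ _ _ hK)
  · intro h a b c hab
    have := h _ _ ⟨_, self_mem hS c R2.σ⟩ ((TS_H_diag hS a b).2 hab)
    exact (TS_H_diag hS (c * a) (c * b)).1 this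

theorem right_iff (hS : IdemCovered S) : IsRightCongH S ↔ IsRightCongH (TS S) := by
  constructor
  · rintro h ⟨⟨s, t, α⟩, hx⟩ ⟨⟨u, v, β⟩, hy⟩ ⟨⟨p, q, γ⟩, hz⟩ hH
    obtain ⟨rfl, hK, k, rfl, rfl⟩ := (TS_H hS _ _ _ _ _ _ hx hy).1 hH
    cases α <;>
    exact (TS_H hS _ _ _ _ _ _ _ _).2 ⟨rfl, h _ _ _ hK, k, mul_assoc _ _ _, mul_assoc _ _ _⟩
  · intro h a b c hab
    have := h _ _ ⟨_, self_mem hS c R2.σ⟩ ((TS_H_diag hS a b).2 hab)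
    exact (TS_H_diag hS (a * c) (b * c)).1 this

end

/-- 𝓗 is a left (resp. right) congruence on `S` iff it is so on `T(S)`;
consequently `S` is cryptic iff `T(S)` is cryptic. -/
theorem statement_16 {S : Type*} [Semigroup S] (hS : IdemCovered S) :
    (IsLeftCongH S ↔ IsLeftCongH ↥(TS S)) ∧
    (IsRightCongH S ↔ IsRightCongH ↥(TS S)) ∧
    ((IsLeftCongH S ∧ IsRightCongH S) ↔ (IsLeftCongH ↥(TS S) ∧ IsRightCongH ↥(TS S))) := by
  exact ⟨left_iff hS, right_iff hS, and_congr (left_iff hS) (right_iff hS)⟩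

end SemibandEmbed
end

section
/- A regular semigroup S is completely regular (every element of S lies in a subgroup of S; equivalently, every element is 𝓗-related to an idempotent) if and only if R(S) is completely regular. -/
namespace SemibandEmbed

theorem greenL_exists {S : Type*} [Semigroup S] {a b : S} (h : greenL a b) :
    ∃ u : WithOne S, (a : WithOne S) = u * b := by
  have h1 : (a : WithOne S) ∈ {x : WithOne S | ∃ u : WithOne S, x = u * (a : WithOne S)} :=
    ⟨1, by simp⟩
  rw [greenL] at h
  rw [h] at h1
  exact h1

theorem greenR_exists {S : Type*} [Semigroup S] {a b : S} (h : greenR a b) :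
    ∃ u : WithOne S, (a : WithOne S) = b * u := by
  have h1 : (a : WithOne S) ∈ {x : WithOne S | ∃ u : WithOne S, x = (a : WithOne S) * u} :=
    ⟨1, by simp⟩
  rw [greenR] at h
  rw [h] at h1
  exact h1

theorem greenL_of {S : Type*} [Semigroup S] {a b u v : S} (h : a = u * b) (h' : b = v * a) :
    greenL a b := by
  ext x
  constructor
  · rintro ⟨w, rfl⟩
    refine ⟨w * u, ?_⟩
    rw [mul_assoc, ← WithOne.coe_mul, ← h]
  · rintro ⟨w, rfl⟩
    refine ⟨w * v, ?_⟩
    rw [mul_assoc, ← WithOne.coe_mul, ← h']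

theorem greenR_of {S : Type*} [Semigroup S] {a b u v : S} (h : a = b * u) (h' : b = a * v) :
    greenR a b := by
  ext x
  constructor
  · rintro ⟨w, rfl⟩
    refine ⟨u * w, ?_⟩
    rw [← mul_assoc, ← WithOne.coe_mul, ← h]
  · rintro ⟨w, rfl⟩
    refine ⟨v * w, ?_⟩
    rw [← mul_assoc, ← WithOne.coe_mul, ← h']

/-- Left multiples absorb right identities of the factor. -/
theorem mul_right_absorb {S : Type*} [Semigroup S] {s t c : S}
    (h : ∃ u : WithOne S, (s : WithOne S) = u * t) (hc : t * c = t) : s * c = s := by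
  obtain ⟨u, hu⟩ := h
  apply WithOne.coe_injective
  rw [WithOne.coe_mul, hu, mul_assoc, ← WithOne.coe_mul, hc]

theorem mul_left_absorb {S : Type*} [Semigroup S] {s t c : S}
    (h : ∃ u : WithOne S, (s : WithOne S) = t * u) (hc : c * t = t) : c * s = s := by
  obtain ⟨u, hu⟩ := h
  apply WithOne.coe_injective
  rw [WithOne.coe_mul, hu, ← mul_assoc, ← WithOne.coe_mul, hc]

theorem cr_iff (S : Type*) [Semigroup S] :
    IsCompletelyRegular S ↔ ∀ a : S, ∃ y : S, a * y * a = a ∧ a * y = y * a := by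
  constructor
  · intro h a
    obtain ⟨e, he, hL, hR⟩ := h a
    have hae : a * e = a := mul_right_absorb (greenL_exists hL) he
    have hea : e * a = a := mul_left_absorb (greenR_exists hR) he
    obtain ⟨v, hv⟩ := greenL_exists (show greenL e a from hL.symm)
    obtain ⟨u, hu⟩ := greenR_exists (show greenR e a from hR.symm)
    obtain ⟨y, hy⟩ : ∃ y : S, (y : WithOne S) = e * u := by
      rcases eq_or_ne u 1 with rfl | hne
      · exact ⟨e, by simp⟩
      · obtain ⟨u, rfl⟩ := WithOne.ne_one_iff_exists.1 hne
        exact ⟨e * u, by simp⟩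
    have hy' : (y : WithOne S) = v * e := by
      rw [hy]; nth_rewrite 1 [hv]; rw [mul_assoc, ← hu]
    have h1 : a * y = e := by
      apply WithOne.coe_injective
      rw [WithOne.coe_mul, hy, ← mul_assoc, ← WithOne.coe_mul, hae, ← hu]
    have h2 : y * a = e := by
      apply WithOne.coe_injective
      rw [WithOne.coe_mul, hy', mul_assoc, ← WithOne.coe_mul, hea, ← hv]
    exact ⟨y, by rw [h1, hea], by rw [h1, h2]⟩
  · intro h a
    obtain ⟨y, h1, h2⟩ := h a
    refine ⟨a * y, ?_, ?_, ?_⟩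
    · show a * y * (a * y) = a * y
      rw [← mul_assoc, h1]
    · exact greenL_of (u := a) (v := y) (by rw [h2, ← mul_assoc, h1]) h2
    · exact greenR_of (u := a) (v := y) h1.symm rfl

theorem sd_σ {S : Type*} [Semigroup S] (a b c d : S) (α : R2) :
    ((a, b, R2.σ) : S × S × R2) * (c, d, α) = (a * d, b * d, α) := rfl

theorem sd_τ {S : Type*} [Semigroup S] (a b c d : S) (α : R2) :
    ((a, b, R2.τ) : S × S × R2) * (c, d, α) = (a * c, b * c, α) := rfl

theorem mem_TS {S : Type*} [Semigroup S] (hS : IsRegularSemigroup S) {s t : S}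
    (h : ∃ u : WithOne S, (s : WithOne S) = u * t) (α : R2) : (s, t, α) ∈ TS S := by
  obtain ⟨y, hy⟩ := hS t
  have hy2 : t * (y * t) = t := by rw [← mul_assoc, hy]
  have hf : t * y * (t * y) = t * y := by rw [← mul_assoc, hy]
  have he : y * t * (y * t) = y * t := by rw [mul_assoc, hy2]
  have m1 : ((t * y, t * y, R2.τ) : S × S × R2) ∈ TS S := by
    refine Subsemigroup.subset_closure ⟨?_, 1, by simp⟩
    show _ * _ = _
    rw [sd_τ, hf]
  have m2 : ((t, y * t, R2.σ) : S × S × R2) ∈ TS S := by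
    refine Subsemigroup.subset_closure ⟨?_, t, ?_⟩
    · show _ * _ = _
      rw [sd_σ, he, hy2]
    · show (t : WithOne S) = t * (y * t : S)
      rw [← WithOne.coe_mul, hy2]
  have m3 : ((t, t, R2.σ) : S × S × R2) ∈ TS S := by
    have := mul_mem m1 m2
    rwa [sd_τ, hy] at this
  have m5 : ((y * t, y * t, R2.τ) : S × S × R2) ∈ TS S := by
    refine Subsemigroup.subset_closure ⟨?_, 1, by simp⟩
    show _ * _ = _
    rw [sd_τ, he]
  have m4 : ((s, t, R2.σ) : S × S × R2) ∈ TS S := by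
    obtain ⟨u, hu⟩ := h
    rcases eq_or_ne u 1 with rfl | hne
    · rw [one_mul] at hu
      rw [WithOne.coe_injective hu]
      exact m3
    · obtain ⟨u, rfl⟩ := WithOne.ne_one_iff_exists.1 hne
      rw [← WithOne.coe_mul] at hu
      have hu := WithOne.coe_injective hu
      have m : ((u * (t * y), t * y, R2.σ) : S × S × R2) ∈ TS S := by
        refine Subsemigroup.subset_closure ⟨?_, u, by simp⟩
        show _ * _ = _
        rw [sd_σ, mul_assoc u, hf]
      have := mul_mem m m3
      rwa [sd_σ, mul_assoc u, hy, ← hu] at this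
  cases α with
  | σ => exact m4
  | τ =>
    have := mul_mem m4 m5
    rwa [sd_σ, hy2, mul_right_absorb h hy2] at this

theorem cr_inv {S : Type*} [Semigroup S] (h : IsCompletelyRegular S) (a : S) :
    ∃ y : S, a * (y * a) = a ∧ a * y = y * a ∧ y * (y * a) = y ∧ a * (y * y) = y := by
  obtain ⟨y, h1, h2⟩ := (cr_iff S).1 h a
  have h5 : y * a * (y * a) = y * a := by rw [mul_assoc, ← mul_assoc a, h1]
  have haz : a * (y * a * y) = y * a := by rw [← mul_assoc, ← mul_assoc, h1, h2]
  have hza : y * a * y * a = y * a := by rw [mul_assoc (y * a), h5]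
  have h7 : y * a * (y * a * y) = y * a * y := by rw [← mul_assoc, h5]
  refine ⟨y * a * y, ?_, ?_, ?_, ?_⟩
  · rw [hza, ← mul_assoc, h1]
  · rw [haz, hza]
  · rw [hza, mul_assoc y a y, h2, mul_assoc, h5]
  · rw [← mul_assoc, haz, h7]

/-- a regular semigroup `S` is completely regular iff `R(S)` is. -/
theorem statement_19 {S : Type*} [Semigroup S] (hS : IsRegularSemigroup S) :
    IsCompletelyRegular S ↔ IsCompletelyRegular ↥(RS S) := by
  constructor
  · intro h
    rw [cr_iff]
    rintro ⟨⟨⟨s, t, α⟩, hT⟩, hR⟩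
    have hL : greenL s t := hR
    cases α with
    | σ =>
      obtain ⟨y, h1, h2, h3, h4⟩ := cr_inv h t
      have hY : greenL (s * (y * y)) y := by
        have := greenL_mul_right hL (y * y)
        rwa [h4] at this
      have hs := mul_right_absorb (greenL_exists hL) h1
      refine ⟨⟨⟨(s * (y * y), y, R2.σ), mem_TS hS (greenL_exists hY) _⟩, hY⟩, ?_, ?_⟩
      · apply Subtype.ext; apply Subtype.ext
        show ((s, t, R2.σ) : S × S × R2) * (s * (y * y), y, R2.σ) * (s, t, R2.σ) = (s, t, R2.σ)
        rw [sd_σ, sd_σ, mul_assoc, mul_assoc, hs, h1]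
      · apply Subtype.ext; apply Subtype.ext
        show ((s, t, R2.σ) : S × S × R2) * (s * (y * y), y, R2.σ) =
          (s * (y * y), y, R2.σ) * (s, t, R2.σ)
        rw [sd_σ, sd_σ, mul_assoc s, mul_assoc y, h3, h2]
    | τ =>
      obtain ⟨y, h1, h2, h3, h4⟩ := cr_inv h s
      have hL' : greenL t s := hL.symm
      have hY : greenL (t * (y * y)) y := by
        have := greenL_mul_right hL' (y * y)
        rwa [h4] at this
      have hY' : greenL y (t * (y * y)) := hY.symm
      have hs := mul_right_absorb (greenL_exists hL') h1
      refine ⟨⟨⟨(y, t * (y * y), R2.τ), mem_TS hS (greenL_exists hY') _⟩, hY'⟩, ?_, ?_⟩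
      · apply Subtype.ext; apply Subtype.ext
        show ((s, t, R2.τ) : S × S × R2) * (y, t * (y * y), R2.τ) * (s, t, R2.τ) = (s, t, R2.τ)
        rw [sd_τ, sd_τ, mul_assoc, mul_assoc, hs, h1]
      · apply Subtype.ext; apply Subtype.ext
        show ((s, t, R2.τ) : S × S × R2) * (y, t * (y * y), R2.τ) =
          (y, t * (y * y), R2.τ) * (s, t, R2.τ)
        rw [sd_τ, sd_τ, mul_assoc t, mul_assoc y, h3, h2]
  · intro h
    rw [cr_iff] at h ⊢
    intro t
    have hT : ((t, t, R2.σ) : S × S × R2) ∈ TS S := mem_TS hS ⟨1, by simp⟩ _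
    obtain ⟨⟨⟨⟨p, q, β⟩, hT'⟩, hR'⟩, h1, h2⟩ :=
      h ⟨⟨(t, t, R2.σ), hT⟩, (rfl : greenL t t)⟩
    have h1' : ((t, t, R2.σ) : S × S × R2) * (p, q, β) * (t, t, R2.σ) = (t, t, R2.σ) :=
      congrArg (fun z : ↥(RS S) => (z : S × S × R2)) h1
    have h2' : ((t, t, R2.σ) : S × S × R2) * (p, q, β) = (p, q, β) * (t, t, R2.σ) :=
      congrArg (fun z : ↥(RS S) => (z : S × S × R2)) h2
    refine ⟨q, ?_, ?_⟩
    · cases β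
      · rw [sd_σ, sd_σ] at h1'
        exact congrArg Prod.fst h1'
      · rw [sd_σ, sd_τ] at h1'
        exact congrArg Prod.fst h1'
    · cases β
      · exact congrArg (fun z => z.2.1) h2'
      · exact congrArg (fun z => z.2.1) h2'

end SemibandEmbed
end
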